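/- Let f ∈ A₁(c), set t = f′(c₁), and let m be a real number such that f(x) ≥ m for all x ∈ (−1,1). Then for every x ∈ (−1,c₁): f(x) ≥ c₃ − t·(c₁−x) + (t·(1+c₁) + m − c₃)·(x−c₁)²/(1+c₁)². -/

import Mathlib

open Set Complex

noncomputable section

/-- The doubly-slit plane `ℂ(J)` for `J ⊆ ℝ`. -/
def CSlit (J : Set ℝ) : Set ℂ := {z : ℂ | z.im ≠ 0 ∨ z.re ∈ J}

/-- `ℂ₁ = ℂ((−1,1))`. -/
def C1 : Set ℂ := CSlit (Set.Ioo (-1 : ℝ) 1)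

/-- The class `A₁(c)` of normalized Herglotz functions. -/
structure MemA1 (c₁ c₂ c₃ c₄ : ℝ) (f : ℂ → ℂ) : Prop where
  holo : DifferentiableOn ℂ f C1
  maps : Set.MapsTo f C1 C1
  symm : ∀ z ∈ C1, f (starRingEnd ℂ z) = starRingEnd ℂ (f z)
  upper : ∀ z ∈ C1, 0 < z.im → 0 ≤ (f z).im
  lower : ∀ z ∈ C1, z.im < 0 → (f z).im ≤ 0
  val1 : f (c₁ : ℂ) = (c₃ : ℂ)
  val2 : f (c₂ : ℂ) = (c₄ : ℂ)

open Filter Topology Metric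

lemma normSq_conj_aux (a b : ℂ) :
    normSq (b - starRingEnd ℂ a) = normSq (b - a) + 4 * a.im * b.im := by
  simp only [normSq_apply, sub_re, sub_im, conj_re, conj_im]; ring

lemma phi_im_aux {w ζ : ℂ} (hw : 0 < w.im) (hζ : ‖ζ‖ < 1) :
    0 < ((w - starRingEnd ℂ w * ζ) / (1 - ζ)).im := by
  have h1 : (1 - ζ) ≠ 0 := by
    intro h
    have : ζ = 1 := (sub_eq_zero.mp h).symm
    simp [this] at hζ
  have hn : 0 < normSq (1 - ζ) := normSq_pos.mpr h1
  have h2 : normSq ζ < 1 := by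
    rw [normSq_eq_norm_sq]; nlinarith [norm_nonneg ζ]
  have : ((w - starRingEnd ℂ w * ζ) / (1 - ζ)).im = w.im * (1 - normSq ζ) / normSq (1 - ζ) := by
    rw [div_im, ← sub_div]
    congr 1
    simp only [normSq_apply, sub_re, sub_im, mul_re, mul_im, conj_re, conj_im, one_re, one_im]
    ring
  rw [this]
  apply div_pos (mul_pos hw (by linarith)) hn

/-- Schwarz–Pick in the upper half-plane (strict version). -/
lemma pick_strict (F : ℂ → ℂ) (hd : DifferentiableOn ℂ F {z | 0 < z.im})
    (hF : ∀ z : ℂ, 0 < z.im → 0 < (F z).im) (z w : ℂ) (hz : 0 < z.im) (hw : 0 < w.im) :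
    normSq (F z - F w) * (z.im * w.im) ≤ normSq (z - w) * ((F z).im * (F w).im) := by
  have hne : ∀ a b : ℂ, 0 < a.im → 0 < b.im → b - starRingEnd ℂ a ≠ 0 := by
    intro a b ha hb h
    have := congrArg Complex.im h
    simp at this
    linarith
  let φ : ℂ → ℂ := fun ζ => (w - starRingEnd ℂ w * ζ) / (1 - ζ)
  let ψ : ℂ → ℂ := fun η => (η - F w) / (η - starRingEnd ℂ (F w))
  have hφd : DifferentiableOn ℂ φ (ball 0 1) := by
    intro ζ hζ
    have : (1 - ζ) ≠ 0 := by
      intro h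
      have : ζ = 1 := (sub_eq_zero.mp h).symm
      simp [this] at hζ
    apply DifferentiableAt.differentiableWithinAt
    apply DifferentiableAt.div _ _ this <;> fun_prop
  have hφm : MapsTo φ (ball 0 1) {z | 0 < z.im} := by
    intro ζ hζ
    exact phi_im_aux hw (by simpa using hζ)
  have hψd : DifferentiableOn ℂ ψ {z | 0 < z.im} := by
    intro η hη
    apply DifferentiableAt.differentiableWithinAt
    have h5 : η - starRingEnd ℂ (F w) ≠ 0 := hne _ _ (hF w hw) hη
    exact DifferentiableAt.div (c := fun η => η - F w) (d := fun η => η - starRingEnd ℂ (F w))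
      (by fun_prop) (by fun_prop) h5
  have hGd : DifferentiableOn ℂ (fun ζ => ψ (F (φ ζ))) (ball 0 1) :=
    hψd.comp (hd.comp hφd hφm) (fun ζ hζ => hF _ (hφm hζ))
  have hGm : MapsTo (fun ζ => ψ (F (φ ζ))) (ball 0 1) (closedBall 0 1) := by
    intro ζ hζ
    have h1 := hF _ (hφm hζ)
    have h2 := hF w hw
    simp only [mem_closedBall, dist_zero_right, ψ]
    rw [norm_div]
    apply div_le_one_of_le₀ _ (norm_nonneg _)
    apply le_of_sq_le_sq _ (norm_nonneg _)
    rw [← normSq_eq_norm_sq, ← normSq_eq_norm_sq, normSq_conj_aux]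
    have := mul_pos h1 h2
    nlinarith
  have hzw := hne w z hw hz
  have hζn : ‖(z - w) / (z - starRingEnd ℂ w)‖ < 1 := by
    rw [norm_div, div_lt_one (norm_pos_iff.mpr hzw)]
    apply lt_of_pow_lt_pow_left₀ 2 (norm_nonneg _)
    rw [← normSq_eq_norm_sq, ← normSq_eq_norm_sq, normSq_conj_aux]
    have := mul_pos hw hz
    nlinarith
  have hφz : φ ((z - w) / (z - starRingEnd ℂ w)) = z := by
    have h3 : w - starRingEnd ℂ w ≠ 0 := hne w w hw hw
    have h4 : 1 - (z - w) / (z - starRingEnd ℂ w) ≠ 0 := by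
      intro h
      have : (z - w) / (z - starRingEnd ℂ w) = 1 := (sub_eq_zero.mp h).symm
      simp [this] at hζn
    simp only [φ]
    rw [div_eq_iff h4]
    field_simp
    ring
  have key := norm_le_norm_of_mapsTo_ball hGd hGm (by simp [ψ, φ]) hζn
  simp only [hφz, ψ] at key
  have hF2 := hne (F w) (F z) (hF w hw) (hF z hz)
  rw [norm_div, norm_div, div_le_div_iff₀ (norm_pos_iff.mpr hF2) (norm_pos_iff.mpr hzw)] at key
  have key2 := pow_le_pow_left₀ (by positivity) key 2
  rw [mul_pow, mul_pow] at key2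
  simp only [← normSq_eq_norm_sq] at key2
  rw [normSq_conj_aux w z, normSq_conj_aux (F w) (F z)] at key2
  nlinarith

lemma pick_weak (F : ℂ → ℂ) (hd : DifferentiableOn ℂ F {z | 0 < z.im})
    (hF : ∀ z : ℂ, 0 < z.im → 0 ≤ (F z).im) (z w : ℂ) (hz : 0 < z.im) (hw : 0 < w.im) :
    normSq (F z - F w) * (z.im * w.im) ≤ normSq (z - w) * ((F z).im * (F w).im) := by
  have h : ∀ δ : ℝ, 0 < δ → normSq (F z - F w) * (z.im * w.im) ≤
      normSq (z - w) * (((F z).im + δ) * ((F w).im + δ)) := by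
    intro δ hδ
    have := pick_strict (fun z => F z + δ * I) (hd.add_const _)
      (fun z hz => by have := hF z hz; simp; linarith) z w hz hw
    simpa using this
  have ht : Tendsto (fun δ : ℝ => normSq (z - w) * (((F z).im + δ) * ((F w).im + δ))) (𝓝[>] 0)
      (𝓝 (normSq (z - w) * (((F z).im + 0) * ((F w).im + 0)))) := by
    apply Tendsto.mono_left _ nhdsWithin_le_nhds
    apply Continuous.tendsto (by fun_prop : Continuous (fun δ : ℝ => normSq (z - w) * (((F z).im + δ) * ((F w).im + δ))))
  have := ge_of_tendsto ht (eventually_of_mem self_mem_nhdsWithin h)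
  simpa using this

lemma isOpen_C1 : IsOpen C1 := by
  have : C1 = {z : ℂ | z.im ≠ 0} ∪ (Complex.re ⁻¹' (Ioo (-1) 1)) := rfl
  rw [this]
  exact (isOpen_ne_fun continuous_im continuous_const).union (isOpen_Ioo.preimage continuous_re)

lemma real_mem_C1 {x : ℝ} (hx : x ∈ Ioo (-1 : ℝ) 1) : (x : ℂ) ∈ C1 := Or.inr (by simpa using hx)

lemma tendsto_im_aux {f : ℂ → ℂ} {x : ℝ} {D : ℂ} (h : HasDerivAt f D (x : ℂ))
    (h0 : (f x).im = 0) :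
    Tendsto (fun ε : ℝ => (f (x + ε * I)).im / ε) (𝓝[>] 0) (𝓝 D.re) := by
  have hp : HasDerivAt (fun ζ : ℂ => (x : ℂ) + ζ * I) I ((0 : ℝ) : ℂ) := by
    simpa using ((hasDerivAt_id ((0 : ℝ) : ℂ)).mul_const I).const_add (x : ℂ)
  have h1 : HasDerivAt (fun ζ : ℂ => f ((x : ℂ) + ζ * I)) (D * I) ((0 : ℝ) : ℂ) := by
    apply HasDerivAt.comp ((0 : ℝ) : ℂ) (h₂ := f) _ hp
    simpa using h
  have h2 := h1.comp_ofReal.tendsto_slope_zero_right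
  have h3 := (continuous_im.tendsto _).comp h2
  simp only [mul_im, I_re, I_im, mul_zero, mul_one, add_zero] at h3
  refine h3.congr (fun ε => ?_)
  simp only [Function.comp_apply, zero_add, ofReal_zero, zero_mul, add_zero, smul_im, sub_im, h0,
    sub_zero, smul_eq_mul, div_eq_inv_mul]

section
variable {c₁ c₂ c₃ c₄ : ℝ} {f : ℂ → ℂ}

lemma f_real (hf : MemA1 c₁ c₂ c₃ c₄ f) {x : ℝ} (hx : x ∈ Ioo (-1 : ℝ) 1) : (f x).im = 0 := by
  have := hf.symm x (real_mem_C1 hx)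
  rw [conj_ofReal] at this
  exact conj_eq_iff_im.mp this.symm

lemma f_deriv (hf : MemA1 c₁ c₂ c₃ c₄ f) {x : ℝ} (hx : x ∈ Ioo (-1 : ℝ) 1) :
    HasDerivAt f (deriv f x) (x : ℂ) :=
  (hf.holo.differentiableAt (isOpen_C1.mem_nhds (real_mem_C1 hx))).hasDerivAt

lemma f_upper (hf : MemA1 c₁ c₂ c₃ c₄ f) (z : ℂ) (hz : 0 < z.im) : 0 ≤ (f z).im :=
  hf.upper z (Or.inl hz.ne') hz

lemma deriv_nonneg_aux (hf : MemA1 c₁ c₂ c₃ c₄ f) {x : ℝ} (hx : x ∈ Ioo (-1 : ℝ) 1) :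
    0 ≤ (deriv f x).re := by
  refine ge_of_tendsto (tendsto_im_aux (f_deriv hf hx) (f_real hf hx)) ?_
  filter_upwards [self_mem_nhdsWithin] with ε hε
  have hε : 0 < ε := hε
  exact div_nonneg (f_upper hf _ (by simpa using hε)) hε.le

lemma f_cont_aux {x : ℝ} {D : ℂ} (h : HasDerivAt f D (x : ℂ)) :
    Tendsto (fun ε : ℝ => f (x + ε * I)) (𝓝[>] 0) (𝓝 (f x)) := by
  apply h.continuousAt.tendsto.comp
  apply Tendsto.mono_left _ nhdsWithin_le_nhds
  have : Continuous (fun ε : ℝ => (x : ℂ) + ε * I) := by fun_prop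
  simpa using this.tendsto 0

lemma loewner (hf : MemA1 c₁ c₂ c₃ c₄ f) {x y : ℝ} (hx : x ∈ Ioo (-1 : ℝ) 1)
    (hy : y ∈ Ioo (-1 : ℝ) 1) :
    ((f x).re - (f y).re) ^ 2 ≤ (x - y) ^ 2 * ((deriv f x).re * (deriv f y).re) := by
  have hL : Tendsto (fun ε : ℝ => normSq (f (x + ε * I) - f (y + ε * I))) (𝓝[>] 0)
      (𝓝 (normSq (f x - f y))) :=
    (continuous_normSq.tendsto _).comp ((f_cont_aux (f_deriv hf hx)).sub (f_cont_aux (f_deriv hf hy)))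
  have hR := ((tendsto_im_aux (f_deriv hf hx) (f_real hf hx)).mul
    (tendsto_im_aux (f_deriv hf hy) (f_real hf hy))).const_mul ((x - y) ^ 2)
  have := le_of_tendsto_of_tendsto hL hR ?_
  · rw [normSq_apply, sub_re, sub_im, f_real hf hx, f_real hf hy] at this
    nlinarith
  · filter_upwards [self_mem_nhdsWithin] with ε hε
    have hε : 0 < ε := hε
    have := pick_weak f (hf.holo.mono (fun z hz => Or.inl (ne_of_gt hz))) (f_upper hf)
      (x + ε * I) (y + ε * I) (by simpa using hε) (by simpa using hε)
    have e : normSq ((x : ℂ) + ε * I - (y + ε * I)) = (x - y) ^ 2 := by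
      simp [normSq_apply]; ring
    rw [e] at this
    simp only [add_im, ofReal_im, mul_im, ofReal_re, I_im, mul_one, I_re, mul_zero, add_zero,
      zero_add] at this
    rw [div_mul_div_comm, ← mul_div_assoc, le_div_iff₀ (by positivity)]
    exact this

end

theorem stmt15 (c₁ c₂ c₃ c₄ : ℝ)
    (h1 : -1 < c₁) (h12 : c₁ < c₂) (h2 : c₂ < 1)
    (h3 : -1 < c₃) (h34 : c₃ < c₄) (h4 : c₄ < 1)
    (f : ℂ → ℂ) (hf : MemA1 c₁ c₂ c₃ c₄ f)
    (t m : ℝ)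
    (ht : t = deriv (fun y : ℝ => (f y).re) c₁)
    (hm : ∀ x ∈ Set.Ioo (-1 : ℝ) 1, m ≤ (f x).re) :
    ∀ x ∈ Set.Ioo (-1 : ℝ) c₁,
      c₃ - t * (c₁ - x) +
          (t * (1 + c₁) + m - c₃) * (x - c₁) ^ 2 / (1 + c₁) ^ 2 ≤ (f x).re := by
  have hc1 : c₁ ∈ Ioo (-1 : ℝ) 1 := ⟨h1, by linarith⟩
  have hder : ∀ x ∈ Ioo (-1 : ℝ) 1,
      HasDerivAt (fun y : ℝ => (f y).re) (deriv f x).re x := fun x hx =>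
    (f_deriv hf hx).real_of_complex
  have ht' : t = (deriv f c₁).re := by rw [ht]; exact (hder c₁ hc1).deriv
  have hv : (f c₁).re = c₃ := by rw [hf.val1, ofReal_re]
  have ht0 : 0 ≤ t := ht' ▸ deriv_nonneg_aux hf hc1
  let g : ℝ → ℝ := fun x => ((f x).re - c₃ - t * (x - c₁)) / (x - c₁) ^ 2
  have hg : ∀ x ∈ Ioo (-1 : ℝ) c₁, HasDerivAt g
      ((((deriv f x).re - t) * (x - c₁) ^ 2 - ((f x).re - c₃ - t * (x - c₁)) * (2 * (x - c₁)))
        / ((x - c₁) ^ 2) ^ 2) x := by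
    intro x hx
    have hx1 : x ∈ Ioo (-1 : ℝ) 1 := ⟨hx.1, hx.2.trans hc1.2⟩
    have hne : (x - c₁) ^ 2 ≠ 0 := pow_ne_zero _ (sub_ne_zero.mpr hx.2.ne)
    have hs : HasDerivAt (fun y : ℝ => y - c₁) 1 x := (hasDerivAt_id x).sub_const c₁
    have hn : HasDerivAt (fun y : ℝ => (f y).re - c₃ - t * (y - c₁)) ((deriv f x).re - t) x := by
      simpa using! ((hder x hx1).sub_const c₃).sub (hs.const_mul t)
    have hp : HasDerivAt (fun y : ℝ => (y - c₁) ^ 2) (2 * (x - c₁)) x := by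
      simpa using! hs.pow 2
    exact hn.div hp hne
  have hmono : MonotoneOn g (Ioo (-1) c₁) := by
    apply monotoneOn_of_deriv_nonneg (convex_Ioo _ _)
    · exact fun x hx => (hg x hx).continuousAt.continuousWithinAt
    · rw [interior_Ioo]
      exact fun x hx => (hg x hx).differentiableAt.differentiableWithinAt
    · rw [interior_Ioo]
      intro x hx
      rw [(hg x hx).deriv]
      apply div_nonneg _ (by positivity)
      have hx1 : x ∈ Ioo (-1 : ℝ) 1 := ⟨hx.1, hx.2.trans hc1.2⟩
      have hl := loewner hf hx1 hc1
      rw [hv, ← ht'] at hl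
      have hd := deriv_nonneg_aux hf hx1
      set d := (deriv f x).re
      set h := (f x).re - c₃
      have hu : 0 < c₁ - x := by linarith [hx.2]
      have h2 : (2 * (-h)) ≤ (c₁ - x) * (d + t) := by
        apply le_of_sq_le_sq _ (by positivity)
        nlinarith [mul_nonneg (sq_nonneg (c₁ - x)) (sq_nonneg (d - t))]
      nlinarith [mul_nonneg hu.le (sub_nonneg.mpr h2)]
  intro x hx
  have hlow : (m - c₃ - t * (-1 - c₁)) / (-1 - c₁) ^ 2 ≤ g x := by
    have hT : Tendsto (fun y : ℝ => (m - c₃ - t * (y - c₁)) / (y - c₁) ^ 2) (𝓝[>] (-1))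
        (𝓝 ((m - c₃ - t * (-1 - c₁)) / (-1 - c₁) ^ 2)) := by
      apply Tendsto.mono_left _ nhdsWithin_le_nhds
      apply ContinuousAt.tendsto (f := fun y : ℝ => (m - c₃ - t * (y - c₁)) / (y - c₁) ^ 2)
      apply ContinuousAt.div (by fun_prop) (by fun_prop)
      apply pow_ne_zero; linarith
    apply le_of_tendsto hT
    filter_upwards [Ioo_mem_nhdsGT hx.1] with y hy
    have hyc : y ∈ Ioo (-1 : ℝ) c₁ := ⟨hy.1, hy.2.trans hx.2⟩
    refine le_trans ?_ (hmono hyc hx hy.2.le)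
    have := hm y ⟨hy.1, hyc.2.trans hc1.2⟩
    simp only [g]
    gcongr
  have hpos : 0 < (x - c₁) ^ 2 := by
    have : x - c₁ ≠ 0 := sub_ne_zero.mpr hx.2.ne
    positivity
  have h5 := (le_div_iff₀ hpos).mp hlow
  have e : (m - c₃ - t * (-1 - c₁)) / (-1 - c₁) ^ 2 * (x - c₁) ^ 2 =
      (t * (1 + c₁) + m - c₃) * (x - c₁) ^ 2 / (1 + c₁) ^ 2 := by
    have : (-1 - c₁) ^ 2 = (1 + c₁) ^ 2 := by ring
    rw [this]; ring
  rw [e] at h5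
  linarith
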